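/- Let m ≥ 2. Then for every η ∈ Δ_m, every τ ∈ ℝ^{m−1}, and every index l ∈ {1,…,m} with τ̃_l = max_{j∈{1,…,m}} τ̃_j (where τ̃ = (τ_1, …, τ_{m−1}, 1 − Σ_{k=1}^{m−1} τ_k)): (1/m) · ( max_{j∈{1,…,m}} η_j − η_l ) ≤ Σ_{j=1}^m η_j L^{zo4}(j, τ) − (1 − max_{j∈{1,…,m}} η_j). -/

import Mathlib

open Finset

/-- `τ̃ = (τ_1, …, τ_{m-1}, 1 - Σ τ_k)`. -/
noncomputable def tauTilde (d : ℕ) (τ : Fin d → ℝ) : Fin (d + 1) → ℝ :=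
  Fin.snoc τ (1 - ∑ i, τ i)

/-- `S_τ^{(j)}` as supremum over subsets (equivalent to the sorted form, see
Statement 8 context). -/
noncomputable def Szo4 (d : ℕ) (τt : Fin (d + 1) → ℝ) (j : Fin (d + 1)) : ℝ :=
  sSup (insert 0 {x : ℝ | ∃ A : Finset (Fin (d + 1)),
    A ⊆ Finset.univ.erase j ∧ A.card ≤ d - 1 ∧
    x = (τt j + ∑ k ∈ A, τt k - 1) / (A.card + 1)})

/-- The hinge-like loss `L^{zo4}(j,τ) = 1 - τ̃_j + S_τ^{(j)}`. -/
noncomputable def Lzo4 (d : ℕ) (j : Fin (d + 1)) (τ : Fin d → ℝ) : ℝ :=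
  1 - tauTilde d τ j + Szo4 d (tauTilde d τ) j

/-!
Choose a threshold `θ` at which the truncations `p j = (τ̃ j - θ)⁺` sum to `1`; then `p` is the
Euclidean projection of `τ̃` onto the simplex. Using the indices other than `j` that lie above `θ`
as the set `A` in the definition of `S_τ^{(j)}` gives `min (τ̃ j) θ ≤ S_τ^{(j)}`, that is,
`1 - p j ≤ L^{zo4}(j, τ)`. Hence the regret is at least `max η - ∑ j, η j * p j`, the `p`-average of
the nonnegative gaps `max η - η j`, and `p` gives the maximal index `l` weight at least `1 / m`.
-/

section Threshold

variable {ι α : Type*} [AddCommGroup α] [LinearOrder α] [IsOrderedAddMonoid α]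

theorem sum_posPart_sub_eq_sum_filter (s : Finset ι) (t : ι → α) (θ : α) :
    ∑ i ∈ s, (t i - θ)⁺ = ∑ i ∈ s with θ < t i, (t i - θ) := by
  rw [sum_filter]
  refine sum_congr rfl fun i _ => ?_
  split_ifs with h
  · exact posPart_of_nonneg (sub_nonneg.2 h.le)
  · exact posPart_of_nonpos (sub_nonpos.2 (not_lt.1 h))

theorem add_sum_filter_erase_sub_sum_posPart_sub [DecidableEq ι] {s : Finset ι} {j : ι}
    (hj : j ∈ s) (t : ι → α) (θ : α) :
    t j + ∑ k ∈ s.erase j with θ < t k, t k - ∑ i ∈ s, (t i - θ)⁺ =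
      min (t j) θ + #{k ∈ s.erase j | θ < t k} • θ := by
  rw [← add_sum_erase s _ hj, sum_posPart_sub_eq_sum_filter, sum_sub_distrib, sum_const,
    inf_eq_sub_posPart_sub]
  abel

theorem exists_sum_posPart_sub_eq {s : Finset ι} (hs : s.Nonempty) (t : ι → ℝ) {c : ℝ}
    (hc : 0 ≤ c) : ∃ θ, ∑ i ∈ s, (t i - θ)⁺ = c := by
  obtain ⟨i, hi, hmax⟩ := s.exists_max_image t hs
  have hcont : Continuous fun θ => ∑ k ∈ s, (t k - θ)⁺ := by
    simp only [posPart_def]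
    fun_prop
  have hlow : c ≤ ∑ k ∈ s, (t k - (t i - c))⁺ := calc
    c = t i - (t i - c) := (sub_sub_cancel _ _).symm
    _ ≤ (t i - (t i - c))⁺ := le_posPart _
    _ ≤ _ := single_le_sum (f := fun k => (t k - (t i - c))⁺) (fun _ _ => posPart_nonneg _) hi
  have hhigh : ∑ k ∈ s, (t k - t i)⁺ = 0 :=
    sum_eq_zero fun k hk => posPart_of_nonpos (sub_nonpos.2 (hmax k hk))
  obtain ⟨θ, -, hθ⟩ := intermediate_value_Icc' (sub_le_self (t i) hc) hcont.continuousOn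
    ⟨hhigh.trans_le hc, hlow⟩
  exact ⟨θ, hθ⟩

end Threshold

theorem mul_sub_le_sub_sum_mul {ι R : Type*} [CommRing R] [PartialOrder R] [IsOrderedRing R]
    {s : Finset ι} {p w : ι → R} {M : R} (hp : ∀ i ∈ s, 0 ≤ p i) (hp1 : ∑ i ∈ s, p i = 1)
    (hw : ∀ i ∈ s, w i ≤ M) {l : ι} (hl : l ∈ s) :
    p l * (M - w l) ≤ M - ∑ i ∈ s, w i * p i := calc
  p l * (M - w l) ≤ ∑ i ∈ s, p i * (M - w i) :=
    single_le_sum (f := fun i => p i * (M - w i))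
      (fun i hi => mul_nonneg (hp i hi) (sub_nonneg.2 (hw i hi))) hl
  _ = M - ∑ i ∈ s, w i * p i := by
    simp_rw [mul_comm (w _), mul_sub, sum_sub_distrib, ← sum_mul, hp1, one_mul]

section Loss

variable {d : ℕ}

theorem sum_tauTilde (τ : Fin d → ℝ) : ∑ j, tauTilde d τ j = 1 := by
  simp [tauTilde, Fin.sum_univ_castSucc]

theorem bddAbove_Szo4_candidates (t : Fin (d + 1) → ℝ) (j : Fin (d + 1)) :
    BddAbove (insert 0 {x : ℝ | ∃ A : Finset (Fin (d + 1)), A ⊆ univ.erase j ∧ #A ≤ d - 1 ∧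
      x = (t j + ∑ k ∈ A, t k - 1) / (#A + 1)}) := by
  refine (((Set.finite_range fun A : Finset (Fin (d + 1)) =>
    (t j + ∑ k ∈ A, t k - 1) / ((#A : ℝ) + 1)).subset ?_).insert 0).bddAbove
  rintro x ⟨A, -, -, rfl⟩
  exact Set.mem_range_self A

theorem Szo4_nonneg (t : Fin (d + 1) → ℝ) (j : Fin (d + 1)) : 0 ≤ Szo4 d t j :=
  le_csSup (bddAbove_Szo4_candidates t j) (Set.mem_insert 0 _)

theorem div_le_Szo4 (t : Fin (d + 1) → ℝ) {j : Fin (d + 1)} {A : Finset (Fin (d + 1))}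
    (hA : A ⊆ univ.erase j) (hcard : #A ≤ d - 1) :
    (t j + ∑ k ∈ A, t k - 1) / (#A + 1) ≤ Szo4 d t j :=
  le_csSup (bddAbove_Szo4_candidates t j) (Set.mem_insert_of_mem 0 ⟨A, hA, hcard, rfl⟩)

theorem min_le_Szo4 {t : Fin (d + 1) → ℝ} (ht : ∑ i, t i = 1) {θ : ℝ}
    (hθ : ∑ i, (t i - θ)⁺ = 1) (j : Fin (d + 1)) : min (t j) θ ≤ Szo4 d t j := by
  rcases le_or_gt (min (t j) θ) 0 with hmin | hmin
  · exact hmin.trans (Szo4_nonneg t j)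
  have hθ_pos : 0 < θ := hmin.trans_le (min_le_right _ _)
  set A : Finset (Fin (d + 1)) := {k ∈ univ.erase j | θ < t k}
  have hA : A ⊆ univ.erase j := filter_subset _ _
  have hsum : t j + ∑ k ∈ A, t k - 1 = min (t j) θ + #A * θ := by
    rw [← hθ, ← nsmul_eq_mul]
    exact add_sum_filter_erase_sub_sum_posPart_sub (mem_univ j) t θ
  -- If `A` were all of `univ.erase j`, the left side of `hsum` would vanish.
  have hA_ne : A ≠ univ.erase j := by
    intro h
    rw [h, add_sum_erase _ _ (mem_univ j), ht, sub_self] at hsum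
    exact hsum.not_lt (by positivity)
  have hcard : #A ≤ d - 1 := by
    have := card_lt_card (hA.ssubset_of_ne hA_ne)
    rw [card_erase_of_mem (mem_univ j), card_univ, Fintype.card_fin] at this
    omega
  calc min (t j) θ ≤ (t j + ∑ k ∈ A, t k - 1) / (#A + 1) := by
        rw [le_div_iff₀ (by positivity), hsum, mul_add_one, add_comm, mul_comm]
        gcongr
        exact min_le_right _ _
    _ ≤ Szo4 d t j := div_le_Szo4 t hA hcard

theorem one_sub_posPart_sub_le_Lzo4 {τ : Fin d → ℝ} {θ : ℝ}
    (hθ : ∑ i, (tauTilde d τ i - θ)⁺ = 1) (j : Fin (d + 1)) :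
    1 - (tauTilde d τ j - θ)⁺ ≤ Lzo4 d j τ := by
  have h := min_le_Szo4 (sum_tauTilde τ) hθ j
  rw [inf_eq_sub_posPart_sub] at h
  unfold Lzo4
  linarith

end Loss

theorem stmt10 (d : ℕ) (hd : 1 ≤ d)
    (η : Fin (d + 1) → ℝ) (hη0 : ∀ j, 0 ≤ η j) (hη1 : ∑ j, η j = 1)
    (τ : Fin d → ℝ) (l : Fin (d + 1))
    (hl : ∀ j, tauTilde d τ j ≤ tauTilde d τ l) :
    (1 / ((d : ℝ) + 1)) * ((⨆ j, η j) - η l) ≤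
      ∑ j, η j * Lzo4 d j τ - (1 - ⨆ j, η j) := by
  obtain ⟨θ, hθ⟩ := exists_sum_posPart_sub_eq univ_nonempty (tauTilde d τ) zero_le_one
  set p : Fin (d + 1) → ℝ := fun j => (tauTilde d τ j - θ)⁺
  set M := ⨆ j, η j
  have hM : ∀ j, η j ≤ M := le_ciSup (Set.finite_range η).bddAbove
  have hpl : 1 / ((d : ℝ) + 1) ≤ p l := by
    have h : ∑ j, p j ≤ #univ • p l :=
      sum_le_card_nsmul _ _ _ fun j _ => posPart_mono (sub_le_sub_right (hl j) θ)
    rw [div_le_iff₀' (by positivity)]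
    simpa [p, hθ] using h
  calc 1 / ((d : ℝ) + 1) * (M - η l)
      ≤ p l * (M - η l) := mul_le_mul_of_nonneg_right hpl (sub_nonneg.2 (hM l))
    _ ≤ M - ∑ j, η j * p j :=
      mul_sub_le_sub_sum_mul (fun _ _ => posPart_nonneg _) hθ (fun j _ => hM j) (mem_univ l)
    _ = ∑ j, η j * (1 - p j) - (1 - M) := by
      simp only [mul_sub, mul_one, sum_sub_distrib, hη1]
      ring
    _ ≤ ∑ j, η j * Lzo4 d j τ - (1 - M) := by
      gcongr with j
      · exact hη0 j
      · exact one_sub_posPart_sub_le_Lzo4 hθ j
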